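/- arXiv:2105.07859 — 3 statements merged into one kernel-verified Lean document; each statement's English description precedes it below -/
import Mathlib

section
/- Let K be a semi-symmetric algebraic curvature tensor on a pseudo-Euclidean space (V,⟨·,·⟩), and let χ be the minimal polynomial of the Ricci operator Ric_K. Then every monic real polynomial P that is irreducible over ℝ, different from X, and divides χ satisfies P² ∤ χ, and X³ does not divide χ. Equivalently, χ = ∏ᵢ Pᵢ where the Pᵢ are pairwise coprime and each Pᵢ is either irreducible over ℝ or equal to X². -/
open Polynomial

/-- The linear map `a ↦ K u a v`, whose trace gives the Ricci curvature `ric(u,v)`. -/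
def ricMap {V : Type*} [AddCommGroup V] [Module ℝ V]
    (K : V →ₗ[ℝ] V →ₗ[ℝ] Module.End ℝ V) (u v : V) : V →ₗ[ℝ] V where
  toFun a := K u a v
  map_add' a b := by simp
  map_smul' r a := by simp

/-!
Semi-symmetry says that each `K x y` is a derivation of `K`. As it is also skew-adjoint, it commutes
with the Ricci operator `Ric`, and the Bianchi identity upgrades this to
`K (Ric u) v = Ric * K u v = K u (Ric v)`. The same identity then holds for every polynomial `N` in
`Ric`, so `a ↦ K (N u) a v` is the composition of `a ↦ K u a v` with the commuting operator `N`.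
If `N` is nilpotent, so is this composition; its trace `⟨Ric (N u), v⟩` vanishes, that is,
`Ric * N = 0`. The minimal polynomial `χ` of `Ric` divides a power of some squarefree `s`, so that
`N = s(Ric)` is nilpotent and hence `χ ∣ X * s`.
-/

section Divisibility

variable {M : Type*} [CommMonoidWithZero M]

lemma associated_of_sq_dvd_mul_of_squarefree [DecompositionMonoid M] {p q s : M}
    (hs : Squarefree s) (hp : Irreducible p) (hq : Irreducible q) (h : p ^ 2 ∣ q * s) :
    Associated p q := by
  by_contra hpq
  have hrel : IsRelPrime p q :=
    hp.isRelPrime_iff_not_dvd.mpr fun hdvd => hpq (hp.associated_of_dvd hq hdvd)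
  have hdvd : p ^ 2 ∣ s := hrel.pow_left.dvd_of_dvd_mul_left h
  exact hp.not_isUnit (hs p (sq p ▸ hdvd))

lemma not_pow_three_dvd_mul_of_squarefree [IsCancelMulZero M] {q s : M}
    (hs : Squarefree s) (hq : Irreducible q) : ¬ q ^ 3 ∣ q * s := by
  rw [pow_succ', mul_dvd_mul_iff_left hq.ne_zero, sq]
  exact fun hdvd => hq.not_isUnit (hs q hdvd)

end Divisibility

lemma exists_squarefree_minpoly_dvd_X_mul {k A : Type*} [Field k] [Ring A] [Algebra k A] {a : A}
    (ha : IsIntegral k a) (h : ∀ p : k[X], IsNilpotent (aeval a p) → a * aeval a p = 0) :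
    ∃ s : k[X], Squarefree s ∧ minpoly k a ∣ X * s := by
  obtain ⟨s, n, hs, -, hdvd⟩ := exists_squarefree_dvd_pow_of_ne_zero (minpoly.ne_zero ha)
  have hnil : IsNilpotent (aeval a s) := ⟨n, by rw [← map_pow, minpoly.dvd_iff.mp hdvd]⟩
  exact ⟨s, hs, minpoly.dvd k a (by rw [map_mul, aeval_X, h s hnil])⟩

section Ring

variable {R V : Type*} [CommRing R] [AddCommGroup V] [Module R V]

/-- The Ricci form `(u, v) ↦ tr (a ↦ K u a v)` of a curvature tensor `K`; the endomorphism
`a ↦ K u a v` is encoded as `(K u).flip v`. -/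
noncomputable def ricciForm (K : V →ₗ[R] V →ₗ[R] Module.End R V) : LinearMap.BilinForm R V :=
  (LinearMap.lflip.toLinearMap ∘ₗ K).compr₂ (LinearMap.trace R V)

/-- The centroid of a curvature tensor `K`: the algebra of endomorphisms that can be moved freely
between the two arguments and the value of `K`. -/
def curvatureCentroid (K : V →ₗ[R] V →ₗ[R] Module.End R V) :
    Subalgebra R (Module.End R V) where
  carrier := {S | ∀ u v, K (S u) v = S * K u v ∧ K u (S v) = S * K u v}
  mul_mem' {S T} hS hT u v := by
    simp [Module.End.mul_apply, (hS _ _).1, (hS _ _).2, (hT _ _).1, (hT _ _).2, mul_assoc]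
  add_mem' {S T} hS hT u v := by
    simp [(hS _ _).1, (hS _ _).2, (hT _ _).1, (hT _ _).2, add_mul]
  algebraMap_mem' r u v := by simp [Algebra.algebraMap_eq_smul_one]

variable {B : LinearMap.BilinForm R V} {K : V →ₗ[R] V →ₗ[R] Module.End R V}
  {S D Ric : Module.End R V}

lemma ricciForm_apply (u v : V) : ricciForm K u v = LinearMap.trace R V ((K u).flip v) := rfl

lemma ricciForm_add_ricciForm_eq_zero_of_derivation
    (hD : ∀ a b, ⁅D, K a b⁆ = K (D a) b + K a (D b)) (u v : V) :
    ricciForm K (D u) v + ricciForm K u (D v) = 0 := by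
  have hbracket : (K (D u)).flip v + (K u).flip (D v) = ⁅D, (K u).flip v⁆ := by
    ext a
    have h := LinearMap.congr_fun (hD u a) v
    simp only [Ring.lie_def, LinearMap.sub_apply, LinearMap.add_apply, Module.End.mul_apply,
      LinearMap.flip_apply] at h ⊢
    linear_combination (norm := module) -h
  rw [ricciForm_apply, ricciForm_apply, ← map_add, hbracket, LinearMap.trace_lie]

lemma ricciForm_apply_eq_zero_of_isNilpotent [IsReduced R] (hS : S ∈ curvatureCentroid K)
    (hnil : IsNilpotent S) (u v : V) : ricciForm K (S u) v = 0 := by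
  have hmul : (K (S u)).flip v = S * (K u).flip v :=
    LinearMap.ext fun a => LinearMap.congr_fun (hS u a).1 v
  have hcomm : Commute S ((K u).flip v) :=
    LinearMap.ext fun a => (LinearMap.congr_fun (hS u a).2 v).symm
  rw [ricciForm_apply, hmul]
  exact (LinearMap.isNilpotent_trace_of_isNilpotent (hcomm.isNilpotent_mul_right hnil)).eq_zero

lemma mem_curvatureCentroid_of_commute (h2 : IsSMulRegular V (2 : R))
    (hbianchi : ∀ u v w, K u v w + K v w u + K w u v = 0)
    (hcomm : ∀ u v, Commute S (K u v)) (hbal : ∀ u v, K (S u) v = K u (S v)) :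
    S ∈ curvatureCentroid K := by
  have hcomm_apply (u v w : V) : K u v (S w) = S (K u v w) :=
    (LinearMap.congr_fun (hcomm u v) w).symm
  -- The defect `T u v w` changes sign under cyclic permutation, hence `T u v w = -T u v w`.
  let T (u v w : V) : V := K (S u) v w - S (K u v w)
  have hT (u v w : V) : T u v w + T w u v = 0 := by
    have hS : K (S u) v w + S (K v w u) + K (S w) u v = 0 := by
      rw [← hcomm_apply, hbal w u, hbianchi]
    have hS' : S (K u v w) + S (K v w u) + S (K w u v) = 0 := by
      rw [← map_add, ← map_add, hbianchi, map_zero]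
    calc T u v w + T w u v
        = (K (S u) v w + S (K v w u) + K (S w) u v)
          - (S (K u v w) + S (K v w u) + S (K w u v)) := by simp only [T]; abel
      _ = 0 := by rw [hS, hS', sub_zero]
  have hT_zero (u v w : V) : T u v w = 0 := by
    refine h2.right_eq_zero_of_smul ?_
    calc (2 : R) • T u v w
        = (T u v w + T w u v) - (T w u v + T v w u) + (T v w u + T u v w) := by
          rw [two_smul]; abel
      _ = 0 := by simp only [hT, sub_zero, add_zero]
  have hleft (u v : V) : K (S u) v = S * K u v :=
    LinearMap.ext fun w => sub_eq_zero.mp (hT_zero u v w)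
  exact fun u v => ⟨hleft u v, hbal u v ▸ hleft u v⟩

lemma commute_ric_of_derivation (hB : Function.Injective B)
    (hRic : ∀ u v, B (Ric u) v = ricciForm K u v) (hskew : B.IsSkewAdjoint D)
    (hD : ∀ a b, ⁅D, K a b⁆ = K (D a) b + K a (D b)) : Commute Ric D := by
  refine LinearMap.ext fun u => hB <| LinearMap.ext fun v => ?_
  change B (Ric (D u)) v = B (D (Ric u)) v
  rw [hskew, Pi.neg_apply, map_neg, hRic, hRic, eq_neg_iff_add_eq_zero]
  exact ricciForm_add_ricciForm_eq_zero_of_derivation hD u v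

lemma apply_left_eq_apply_right_of_commute (hB : Function.Injective B)
    (hpair : ∀ u v w t, B (K u v w) t = B (K w t u) v) (hself : B.IsSelfAdjoint S)
    (hcomm : ∀ u v, Commute S (K u v)) (u v : V) : K (S u) v = K u (S v) := by
  refine LinearMap.ext fun w => hB <| LinearMap.ext fun t => ?_
  calc B (K (S u) v w) t = B (K w t (S u)) v := hpair ..
    _ = B (S (K w t u)) v := congrArg (B · v) (LinearMap.congr_fun (hcomm w t) u).symm
    _ = B (K w t u) (S v) := hself ..
    _ = B (K u (S v) w) t := (hpair ..).symm

lemma ric_mul_eq_zero_of_mem_curvatureCentroid [IsReduced R] (hB : Function.Injective B)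
    (hRic : ∀ u v, B (Ric u) v = ricciForm K u v) (hS : S ∈ curvatureCentroid K)
    (hnil : IsNilpotent S) : Ric * S = 0 := by
  refine LinearMap.ext fun u => hB <| LinearMap.ext fun v => ?_
  change B (Ric (S u)) v = B 0 v
  rw [hRic, ricciForm_apply_eq_zero_of_isNilpotent hS hnil, map_zero, LinearMap.zero_apply]

end Ring

section Field

variable {k V : Type*} [Field k] [AddCommGroup V] [Module k V] [FiniteDimensional k V]
  {B : LinearMap.BilinForm k V} {K : V →ₗ[k] V →ₗ[k] Module.End k V} {S D Ric : Module.End k V}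

lemma trace_eq_of_isAdjointPair (hB : B.Nondegenerate) (h : LinearMap.IsAdjointPair B B S D) :
    LinearMap.trace k V S = LinearMap.trace k V D := by
  have hconj : Module.Dual.transpose (R := k) D = (B.toDual hB).conj S := by
    rw [LinearEquiv.conj_apply, LinearEquiv.eq_comp_toLinearMap_symm]
    ext x y
    exact (h x y).symm
  rw [← LinearMap.trace_conj' S (B.toDual hB), ← hconj, LinearMap.trace_transpose']

lemma ricciForm_isSymm (hB : B.Nondegenerate) (hsymm : B.IsSymm)
    (hpair : ∀ u v w t, B (K u v w) t = B (K w t u) v) : (ricciForm K).IsSymm := by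
  refine ⟨fun u v => trace_eq_of_isAdjointPair hB fun a t => ?_⟩
  change B (K u a v) t = B a (K v t u)
  rw [hpair, hsymm.eq]

lemma isSelfAdjoint_of_ricciForm (hB : B.Nondegenerate) (hsymm : B.IsSymm)
    (hpair : ∀ u v w t, B (K u v w) t = B (K w t u) v)
    (hRic : ∀ u v, B (Ric u) v = ricciForm K u v) : B.IsSelfAdjoint Ric := fun u v => by
  rw [hRic, (ricciForm_isSymm hB hsymm hpair).eq, ← hRic, hsymm.eq]

lemma ric_mem_curvatureCentroid [NeZero (2 : k)] (hB : B.Nondegenerate) (hsymm : B.IsSymm)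
    (hskew : ∀ u v, B.IsSkewAdjoint (K u v))
    (hpair : ∀ u v w t, B (K u v w) t = B (K w t u) v)
    (hbianchi : ∀ u v w, K u v w + K v w u + K w u v = 0)
    (hsemi : ∀ u v a b, ⁅K u v, K a b⁆ = K (K u v a) b + K a (K u v b))
    (hRic : ∀ u v, B (Ric u) v = ricciForm K u v) : Ric ∈ curvatureCentroid K := by
  have hinj : Function.Injective B := (B.toDual hB).injective
  have hcomm (u v : V) : Commute Ric (K u v) :=
    commute_ric_of_derivation hinj hRic (hskew u v) (hsemi u v)
  have hself : B.IsSelfAdjoint Ric := isSelfAdjoint_of_ricciForm hB hsymm hpair hRic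
  exact mem_curvatureCentroid_of_commute (IsSMulRegular.of_ne_zero two_ne_zero) hbianchi hcomm
    (apply_left_eq_apply_right_of_commute hinj hpair hself hcomm)

theorem stmt2_general [NeZero (2 : k)] (hB : B.Nondegenerate) (hsymm : B.IsSymm)
    (hskew : ∀ u v, B.IsSkewAdjoint (K u v))
    (hpair : ∀ u v w t, B (K u v w) t = B (K w t u) v)
    (hbianchi : ∀ u v w, K u v w + K v w u + K w u v = 0)
    (hsemi : ∀ u v a b, ⁅K u v, K a b⁆ = K (K u v a) b + K a (K u v b))
    (hRic : ∀ u v, B (Ric u) v = ricciForm K u v) :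
    (∀ P : k[X], Irreducible P → ¬ Associated P X → ¬ P ^ 2 ∣ minpoly k Ric) ∧
      ¬ X ^ 3 ∣ minpoly k Ric := by
  have hmem (p : k[X]) : aeval Ric p ∈ curvatureCentroid K :=
    Algebra.adjoin_le (Set.singleton_subset_iff.mpr
      (ric_mem_curvatureCentroid hB hsymm hskew hpair hbianchi hsemi hRic))
      (aeval_mem_adjoin_singleton k Ric)
  obtain ⟨s, hs, hdvd⟩ := exists_squarefree_minpoly_dvd_X_mul
    (Algebra.IsIntegral.isIntegral Ric) fun p =>
      ric_mul_eq_zero_of_mem_curvatureCentroid (B.toDual hB).injective hRic (hmem p)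
  exact ⟨fun P hP hPX h =>
      hPX (associated_of_sq_dvd_mul_of_squarefree hs hP irreducible_X (h.trans hdvd)),
    fun h => not_pow_three_dvd_mul_of_squarefree hs irreducible_X (h.trans hdvd)⟩

end Field

theorem stmt2 {V : Type*} [AddCommGroup V] [Module ℝ V] [FiniteDimensional ℝ V]
    (B : LinearMap.BilinForm ℝ V) (hB : ∀ u v, B u v = B v u) (hBnd : B.Nondegenerate)
    (K : V →ₗ[ℝ] V →ₗ[ℝ] Module.End ℝ V)
    (hK1 : ∀ u v, K u v = - K v u)
    (hK2 : ∀ u v w t, B (K u v w) t = - B (K u v t) w)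
    (hK3 : ∀ u v w t, B (K u v w) t = B (K w t u) v)
    (hK4 : ∀ u v w, K u v w + K v w u + K w u v = 0)
    (hss : ∀ u v a b, K u v * K a b - K a b * K u v
        = K ((K u v) a) b + K a ((K u v) b))
    (Ric : Module.End ℝ V)
    (hRic : ∀ u v, B (Ric u) v = LinearMap.trace ℝ V (ricMap K u v)) :
    (∀ P : Polynomial ℝ, P.Monic → Irreducible P → P ≠ X →
        P ∣ minpoly ℝ Ric → ¬ (P ^ 2 ∣ minpoly ℝ Ric)) ∧
    ¬ ((X : Polynomial ℝ) ^ 3 ∣ minpoly ℝ Ric) :=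
  (stmt2_general hBnd ⟨hB⟩ (fun u v w t => by simp [hK2 u v w t, hB w]) hK3 hK4 hss hRic).imp_left
    fun h P hmonic hirr hX _ => h P hirr fun hassoc =>
      hX (eq_of_monic_of_associated hmonic monic_X hassoc)
end

section
/- Let K be a semi-symmetric algebraic curvature tensor on a pseudo-Euclidean space (V,⟨·,·⟩), with Ricci operator Ric_K and minimal polynomial χ of Ric_K. Then V is the internal direct sum of the subspace V₀ := ker(Ric_K²) and the subspaces V_P := ker(P(Ric_K)), where P ranges over the monic irreducible real factors of χ different from X; moreover these subspaces are pairwise orthogonal with respect to ⟨·,·⟩, and the restriction of ⟨·,·⟩ to each of them is nondegenerate. -/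
open Polynomial

/-
A polynomial `S` in the Ricci operator `Ric` is self-adjoint and commutes with all `K u v`, so the
pair symmetry and the Bianchi identity of `K` give `K (S u) v = S ∘ K u v = K u (S v)`. Hence
`B (Ric (S u)) v` is the trace of `S ∘ (a ↦ K u a v)`, a product of commuting factors. If `S` is
nilpotent this trace vanishes, so `Ric ∘ S = 0`. For `S` the squarefree part of the minimal
polynomial, evaluated at `Ric`, this says that in the primary decomposition of `Ric` only the
factor `X` can occur with multiplicity `2`. Coprime polynomials in a self-adjoint operator have
orthogonal kernels, and an orthogonal decomposition of a nondegenerate space has nondegenerate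
summands.
-/

open UniqueFactorizationMonoid

section Orthogonal

variable {R V ι : Type*} [CommRing R] [AddCommGroup V] [Module R V]
  {B : LinearMap.BilinForm R V}

theorem orthogonal_iSup (f : ι → Submodule R V) :
    B.orthogonal (⨆ i, f i) = ⨅ i, B.orthogonal (f i) := by
  refine le_antisymm (le_iInf fun i => B.orthogonal_le (le_iSup f i)) fun x hx => ?_
  have hle : ⨆ i, f i ≤ LinearMap.ker (B.flip x) :=
    iSup_le fun i y hy => (Submodule.mem_iInf _).1 hx i y hy
  exact fun y hy => hle hy

variable {f : ι → Submodule R V}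

theorem disjoint_orthogonal_of_iSup_eq_top (hB : B.Nondegenerate)
    (horth : Pairwise fun i j => f j ≤ B.orthogonal (f i)) (htop : ⨆ i, f i = ⊤) (i : ι) :
    Disjoint (f i) (B.orthogonal (f i)) := by
  have hle : f i ⊓ B.orthogonal (f i) ≤ B.orthogonal (⨆ j, f j) := by
    rw [orthogonal_iSup]
    refine le_iInf fun j => ?_
    obtain rfl | hji := eq_or_ne j i
    · exact inf_le_right
    · exact inf_le_left.trans (horth hji)
  rwa [htop, B.orthogonal_top_eq_bot hB, ← disjoint_iff_inf_le] at hle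

theorem iSupIndep_of_pairwise_le_orthogonal (hB : B.Nondegenerate)
    (horth : Pairwise fun i j => f j ≤ B.orthogonal (f i)) (htop : ⨆ i, f i = ⊤) :
    iSupIndep f := fun i =>
  (disjoint_orthogonal_of_iSup_eq_top hB horth htop i).mono_right
    (iSup₂_le fun _ hj => horth hj.symm)

theorem nondegenerate_restrict_of_pairwise_le_orthogonal (hrefl : B.IsRefl)
    (hB : B.Nondegenerate) (horth : Pairwise fun i j => f j ≤ B.orthogonal (f i))
    (htop : ⨆ i, f i = ⊤) (i : ι) : (B.restrict (f i)).Nondegenerate :=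
  B.nondegenerate_restrict_of_disjoint_orthogonal hrefl
    (disjoint_orthogonal_of_iSup_eq_top hB horth htop i)

end Orthogonal

section SelfAdjoint

variable {R V : Type*} [CommRing R] [AddCommGroup V] [Module R V]
  {B : LinearMap.BilinForm R V} {A : Module.End R V}

theorem isSelfAdjoint_aeval (hA : B.IsSelfAdjoint A) (p : R[X]) :
    B.IsSelfAdjoint (aeval A p) := by
  induction p using Polynomial.induction_on with
  | C a => intro u v; simp
  | add p q hp hq => rw [map_add]; exact LinearMap.IsAdjointPair.add hp hq
  | monomial n a ih =>
    have hmul : aeval A (C a * X ^ (n + 1)) = aeval A (C a * X ^ n) * A := by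
      rw [pow_succ, ← mul_assoc, aeval_mul, aeval_X]
    have hcomm : Commute (aeval A (C a * X ^ n)) A := by
      simpa only [aeval_X] using (Commute.all (C a * X ^ n) X).map (aeval (R := R) A)
    have hadj := LinearMap.IsAdjointPair.mul ih hA
    rw [← hcomm.eq, ← hmul] at hadj
    exact hadj

theorem ker_aeval_le_orthogonal_of_isCoprime (hA : B.IsSelfAdjoint A) {p q : R[X]}
    (hpq : IsCoprime p q) :
    LinearMap.ker (aeval A q) ≤ B.orthogonal (LinearMap.ker (aeval A p)) := by
  intro v hv u hu
  obtain ⟨a, b, hab⟩ := hpq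
  have hdecomp : aeval A (a * p) u + aeval A (q * b) u = u := by
    rw [mul_comm q, ← LinearMap.add_apply, ← map_add, hab, map_one, Module.End.one_apply]
  have hp : aeval A (a * p) u = 0 := by
    rw [map_mul, Module.End.mul_apply, LinearMap.mem_ker.1 hu, map_zero]
  change B u v = 0
  rw [← hdecomp, hp, zero_add, map_mul, Module.End.mul_apply,
    isSelfAdjoint_aeval hA q, LinearMap.mem_ker.1 hv, map_zero]

end SelfAdjoint

theorem ker_aeval_prod_of_pairwise_isCoprime {R V ι : Type*} [CommRing R] [AddCommGroup V]
    [Module R V] (A : Module.End R V) {p : ι → R[X]} {s : Finset ι}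
    (hp : (s : Set ι).Pairwise (IsCoprime.onFun p)) :
    LinearMap.ker (aeval A (∏ i ∈ s, p i)) = ⨆ i ∈ s, LinearMap.ker (aeval A (p i)) := by
  classical
  induction s using Finset.induction_on with
  | empty => simp [Module.End.one_eq_id]
  | insert i s hi ih =>
    have hcop : IsCoprime (p i) (∏ j ∈ s, p j) := IsCoprime.prod_right fun j hj =>
      hp (Finset.mem_insert_self i s) (Finset.mem_insert_of_mem hj)
        (ne_of_mem_of_not_mem hj hi).symm
    rw [Finset.prod_insert hi, ← sup_ker_aeval_eq_ker_aeval_mul_of_coprime A hcop,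
      ih (hp.mono (Finset.coe_subset.2 (Finset.subset_insert i s))), Finset.iSup_insert]

theorem mul_radical_dvd_sq_mul_prod_primeFactors_erase {M : Type*} [CommMonoidWithZero M]
    [NormalizationMonoid M] [UniqueFactorizationMonoid M] [DecidableEq M] (x a : M) :
    x * radical a ∣ x ^ 2 * ∏ p ∈ (primeFactors a).erase x, p := by
  have hdvd : radical a ∣ ∏ p ∈ insert x ((primeFactors a).erase x), p :=
    Finset.prod_dvd_prod_of_subset _ _ id (Finset.insert_erase_subset x _)
  rw [Finset.prod_insert (Finset.notMem_erase x _)] at hdvd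
  rw [pow_two, mul_assoc]
  exact mul_dvd_mul_left x hdvd

section SpectralComponent

variable {𝕜 V : Type*} [Field 𝕜] [AddCommGroup V] [Module 𝕜 V]

theorem isCoprime_of_monic_of_irreducible_of_ne {P Q : 𝕜[X]} (hP : P.Monic) (hQ : Q.Monic)
    (hPirr : Irreducible P) (hQirr : Irreducible Q) (hne : P ≠ Q) : IsCoprime P Q :=
  hPirr.coprime_iff_not_dvd.2 fun hdvd =>
    hne (eq_of_monic_of_associated hP hQ (hPirr.associated_of_dvd hQirr hdvd))

/-- The summands of the decomposition of `V` under an endomorphism `A`: the index `none` gives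
`V₀ = ker A²`, and `some P` gives `V_P = ker P(A)` for a monic irreducible factor `P ≠ X` of the
minimal polynomial of `A`. -/
noncomputable def spectralComponent (A : Module.End 𝕜 V) :
    Option {P : 𝕜[X] // P.Monic ∧ Irreducible P ∧ P ≠ X ∧ P ∣ minpoly 𝕜 A} → Submodule 𝕜 V :=
  fun o => o.elim (LinearMap.ker (A ^ 2)) (fun P => LinearMap.ker (aeval A P.1))

theorem spectralComponent_le_orthogonal {B : LinearMap.BilinForm 𝕜 V} {A : Module.End 𝕜 V}
    (hA : B.IsSelfAdjoint A) :
    Pairwise fun o o' => spectralComponent A o' ≤ B.orthogonal (spectralComponent A o) := by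
  have hX (P : {P : 𝕜[X] // P.Monic ∧ Irreducible P ∧ P ≠ X ∧ P ∣ minpoly 𝕜 A}) :
      IsCoprime (X ^ 2) P.1 :=
    (isCoprime_of_monic_of_irreducible_of_ne monic_X P.2.1 irreducible_X P.2.2.1
      P.2.2.2.1.symm).pow_left
  rintro (_ | P) (_ | Q) hne
  · exact absurd rfl hne
  · simpa only [spectralComponent, Option.elim, aeval_X_pow] using
      ker_aeval_le_orthogonal_of_isCoprime hA (hX Q)
  · simpa only [spectralComponent, Option.elim, aeval_X_pow] using
      ker_aeval_le_orthogonal_of_isCoprime hA (hX P).symm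
  · exact ker_aeval_le_orthogonal_of_isCoprime hA <|
      isCoprime_of_monic_of_irreducible_of_ne P.2.1 Q.2.1 P.2.2.1 Q.2.2.1
        fun h => hne (congrArg some (Subtype.ext h))

theorem isNilpotent_aeval_radical_minpoly [DecidableEq 𝕜] [FiniteDimensional 𝕜 V]
    (A : Module.End 𝕜 V) : IsNilpotent (aeval A (radical (minpoly 𝕜 A))) := by
  have hχ : minpoly 𝕜 A ≠ 0 := minpoly.ne_zero (Algebra.IsIntegral.isIntegral A)
  obtain ⟨n, hn⟩ := exists_dvd_radical_self_pow hχ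
  exact ⟨n, by rw [← map_pow, ← minpoly.dvd_iff]; exact hn⟩

theorem iSup_spectralComponent_eq_top [DecidableEq 𝕜] [FiniteDimensional 𝕜 V]
    {A : Module.End 𝕜 V} (hA : A * aeval A (radical (minpoly 𝕜 A)) = 0) :
    ⨆ o, spectralComponent A o = ⊤ := by
  set χ := minpoly 𝕜 A
  have hχ : χ ≠ 0 := minpoly.ne_zero (Algebra.IsIntegral.isIntegral A)
  set F := (primeFactors χ).erase X
  have hmem {P : 𝕜[X]} (hP : P ∈ F) : P.Monic ∧ Irreducible P ∧ P ≠ X ∧ P ∣ χ := by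
    rw [Finset.mem_erase, mem_primeFactors, Polynomial.mem_normalizedFactors_iff hχ] at hP
    exact ⟨hP.2.2.1, hP.2.1, hP.1, hP.2.2.2⟩
  have hcopF : (F : Set 𝕜[X]).Pairwise (IsCoprime.onFun id) := fun P hP Q hQ =>
    isCoprime_of_monic_of_irreducible_of_ne (hmem hP).1 (hmem hQ).1 (hmem hP).2.1 (hmem hQ).2.1
  have hcopX : IsCoprime (X ^ 2) (∏ P ∈ F, P) := (IsCoprime.prod_right fun P hP =>
    isCoprime_of_monic_of_irreducible_of_ne monic_X (hmem hP).1 irreducible_X (hmem hP).2.1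
      (hmem hP).2.2.1.symm).pow_left
  have hzero : aeval A (X ^ 2 * ∏ P ∈ F, P) = 0 := by
    obtain ⟨Q, hQ⟩ := mul_radical_dvd_sq_mul_prod_primeFactors_erase X χ
    rw [hQ, map_mul, map_mul, aeval_X, hA, zero_mul]
  rw [eq_top_iff]
  calc ⊤ = LinearMap.ker (aeval A (X ^ 2 * ∏ P ∈ F, P)) := by rw [hzero, LinearMap.ker_zero]
    _ = LinearMap.ker (A ^ 2) ⊔ ⨆ P ∈ F, LinearMap.ker (aeval A P) := by
      rw [← sup_ker_aeval_eq_ker_aeval_mul_of_coprime A hcopX, aeval_X_pow]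
      exact congrArg _ (ker_aeval_prod_of_pairwise_isCoprime A hcopF)
    _ ≤ ⨆ o, spectralComponent A o := sup_le (le_iSup (spectralComponent A) none)
      (iSup₂_le fun P hP => le_iSup (spectralComponent A) (some ⟨P, hmem hP⟩))

end SpectralComponent

section Curvature

variable {R V : Type*} [CommRing R] [AddCommGroup V] [Module R V]
  {B : LinearMap.BilinForm R V} {K : V →ₗ[R] V →ₗ[R] Module.End R V}

section SelfAdjointCommuting

variable {S : Module.End R V}

theorem curvature_apply_left_eq_apply_right (hB : B.Nondegenerate)
    (hpair : ∀ u v w t, B (K u v w) t = B (K w t u) v) (hS : B.IsSelfAdjoint S)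
    (hcomm : ∀ u v, Commute (K u v) S) (u v : V) : K (S u) v = K u (S v) := by
  ext w
  refine LinearMap.ker_eq_bot.1 hB.ker_eq_bot (LinearMap.ext fun t => ?_)
  calc B (K (S u) v w) t = B (K w t (S u)) v := hpair _ _ _ _
    _ = B (S (K w t u)) v := by
      rw [← Module.End.mul_apply, (hcomm w t).eq, Module.End.mul_apply]
    _ = B (K w t u) (S v) := hS _ _
    _ = B (K u (S v) w) t := (hpair _ _ _ _).symm

theorem curvature_apply_left_eq_mul (hB : B.Nondegenerate) (htwo : IsSMulRegular V (2 : R))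
    (hpair : ∀ u v w t, B (K u v w) t = B (K w t u) v)
    (hbianchi : ∀ u v w, K u v w + K v w u + K w u v = 0) (hS : B.IsSelfAdjoint S)
    (hcomm : ∀ u v, Commute (K u v) S) (u v : V) : K (S u) v = S * K u v := by
  have hswap := curvature_apply_left_eq_apply_right hB hpair hS hcomm
  have hmap (u v w : V) : K u v (S w) = S (K u v w) := LinearMap.congr_fun (hcomm u v).eq w
  ext w
  have bianchi_u := hbianchi (S u) v w
  have bianchi_v := hbianchi u (S v) w
  have bianchi_w := hbianchi u v (S w)
  have map_bianchi := congrArg S (hbianchi u v w)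
  rw [hmap, ← hswap w u] at bianchi_u
  rw [hmap, ← hswap u v] at bianchi_v
  rw [hmap, ← hswap v w] at bianchi_w
  rw [map_add, map_add, map_zero] at map_bianchi
  refine htwo ?_
  change (2 : R) • K (S u) v w = (2 : R) • S (K u v w)
  linear_combination (norm := module) bianchi_u + bianchi_v - bianchi_w - map_bianchi

end SelfAdjointCommuting

/-- `Ric` is the Ricci operator of `K` with respect to `B`: `⟨Ric u, v⟩` is the trace of
`a ↦ K(u, a)v`, which is the map `(K u).flip v`. -/
def IsRicciOperator (B : LinearMap.BilinForm R V) (K : V →ₗ[R] V →ₗ[R] Module.End R V)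
    (Ric : Module.End R V) : Prop :=
  ∀ u v, B (Ric u) v = LinearMap.trace R V ((K u).flip v)

namespace IsRicciOperator

variable {Ric S : Module.End R V}

theorem commute (hRic : IsRicciOperator B K Ric) (hsymm : B.IsSymm) (hB : B.Nondegenerate)
    (hskew : ∀ u v w t, B (K u v w) t = -B (K u v t) w)
    (hss : ∀ u v a b, K u v * K a b - K a b * K u v = K (K u v a) b + K a (K u v b)) (u v : V) :
    Commute (K u v) Ric := by
  have hflip (a c : V) : (K (K u v a)).flip c =
      K u v * (K a).flip c - (K a).flip (K u v c) - (K a).flip c * K u v := by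
    ext b
    have h := LinearMap.congr_fun (hss u v a b) c
    simp only [LinearMap.sub_apply, LinearMap.add_apply, Module.End.mul_apply] at h
    simp only [LinearMap.sub_apply, Module.End.mul_apply, LinearMap.flip_apply]
    exact eq_sub_iff_add_eq.2 h.symm
  refine LinearMap.ext fun a => LinearMap.ker_eq_bot.1 hB.ker_eq_bot (LinearMap.ext fun c => ?_)
  calc B (K u v (Ric a)) c = -LinearMap.trace R V ((K a).flip (K u v c)) := by
        rw [hskew, hsymm.eq, hRic]
    _ = LinearMap.trace R V ((K (K u v a)).flip c) := by
        rw [hflip, map_sub, map_sub, LinearMap.trace_mul_comm]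
        ring
    _ = B (Ric (K u v a)) c := (hRic _ _).symm

theorem mul_eq_zero_of_isNilpotent [IsReduced R] (hRic : IsRicciOperator B K Ric)
    (hB : B.Nondegenerate) (htwo : IsSMulRegular V (2 : R))
    (hpair : ∀ u v w t, B (K u v w) t = B (K w t u) v)
    (hbianchi : ∀ u v w, K u v w + K v w u + K w u v = 0) (hS : B.IsSelfAdjoint S)
    (hcomm : ∀ u v, Commute (K u v) S) (hnil : IsNilpotent S) : Ric * S = 0 := by
  refine LinearMap.ext fun u => LinearMap.ker_eq_bot.1 hB.ker_eq_bot (LinearMap.ext fun v => ?_)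
  have hleft : (K (S u)).flip v = S * (K u).flip v := by
    ext a
    exact LinearMap.congr_fun
      (curvature_apply_left_eq_mul hB htwo hpair hbianchi hS hcomm u a) v
  have hright : (K (S u)).flip v = (K u).flip v * S := by
    ext a
    exact LinearMap.congr_fun (curvature_apply_left_eq_apply_right hB hpair hS hcomm u a) v
  have hnilpotent : IsNilpotent ((K (S u)).flip v) := by
    rw [hleft]
    exact Commute.isNilpotent_mul_right (hleft.symm.trans hright) hnil
  rw [Module.End.mul_apply, hRic, (LinearMap.isNilpotent_trace_of_isNilpotent hnilpotent).eq_zero,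
    LinearMap.zero_apply, map_zero, LinearMap.zero_apply]

end IsRicciOperator

end Curvature

theorem trace_eq_of_isAdjointPair_s3 {𝕜 V : Type*} [Field 𝕜] [AddCommGroup V] [Module 𝕜 V]
    [FiniteDimensional 𝕜 V] {B : LinearMap.BilinForm 𝕜 V} (hB : B.Nondegenerate)
    {f g : Module.End 𝕜 V} (hfg : LinearMap.IsAdjointPair B B f g) :
    LinearMap.trace 𝕜 V f = LinearMap.trace 𝕜 V g := by
  have hconj : (B.toDual hB).conj f = Module.Dual.transpose (R := 𝕜) g := by
    ext φ b
    obtain ⟨a, rfl⟩ := (B.toDual hB).surjective φ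
    rw [LinearEquiv.conj_apply_apply, LinearEquiv.symm_apply_apply]
    exact hfg a b
  rw [← LinearMap.trace_conj' f (B.toDual hB), hconj, LinearMap.trace_transpose']

theorem IsRicciOperator.isSelfAdjoint {𝕜 V : Type*} [Field 𝕜] [AddCommGroup V] [Module 𝕜 V]
    [FiniteDimensional 𝕜 V] {B : LinearMap.BilinForm 𝕜 V}
    {K : V →ₗ[𝕜] V →ₗ[𝕜] Module.End 𝕜 V} {Ric : Module.End 𝕜 V}
    (hRic : IsRicciOperator B K Ric) (hsymm : B.IsSymm) (hB : B.Nondegenerate)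
    (hpair : ∀ u v w t, B (K u v w) t = B (K w t u) v) : B.IsSelfAdjoint Ric := by
  intro u v
  rw [hsymm.eq u, hRic, hRic]
  refine trace_eq_of_isAdjointPair_s3 hB fun a b => ?_
  rw [hsymm.eq a]
  exact hpair u a v b

theorem stmt3_general {𝕜 V : Type*} [Field 𝕜] [NeZero (2 : 𝕜)] [AddCommGroup V] [Module 𝕜 V]
    [FiniteDimensional 𝕜 V] {B : LinearMap.BilinForm 𝕜 V} (hsymm : B.IsSymm)
    (hB : B.Nondegenerate) {K : V →ₗ[𝕜] V →ₗ[𝕜] Module.End 𝕜 V}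
    (hpair : ∀ u v w t, B (K u v w) t = B (K w t u) v)
    (hbianchi : ∀ u v w, K u v w + K v w u + K w u v = 0)
    {Ric : Module.End 𝕜 V} (hRic : IsRicciOperator B K Ric)
    (hcomm : ∀ u v, Commute (K u v) Ric) :
    iSupIndep (spectralComponent Ric) ∧
    (⨆ o, spectralComponent Ric o) = ⊤ ∧
    (∀ o o', o ≠ o' → ∀ u ∈ spectralComponent Ric o, ∀ v ∈ spectralComponent Ric o', B u v = 0) ∧
    (∀ o, (B.restrict (spectralComponent Ric o)).Nondegenerate) := by
  classical
  have hsa : B.IsSelfAdjoint Ric := hRic.isSelfAdjoint hsymm hB hpair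
  have hcomm_aeval (p : 𝕜[X]) (u v : V) : Commute (K u v) (aeval Ric p) :=
    Algebra.commute_of_mem_adjoin_singleton_of_commute
      (aeval_mem_adjoin_singleton 𝕜 Ric) (hcomm u v)
  have hRic_radical : Ric * aeval Ric (radical (minpoly 𝕜 Ric)) = 0 :=
    hRic.mul_eq_zero_of_isNilpotent hB (IsSMulRegular.of_ne_zero two_ne_zero) hpair hbianchi
      (isSelfAdjoint_aeval hsa _) (hcomm_aeval _) (isNilpotent_aeval_radical_minpoly Ric)
  have horth := spectralComponent_le_orthogonal hsa
  have htop : ⨆ o, spectralComponent Ric o = ⊤ := iSup_spectralComponent_eq_top hRic_radical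
  exact ⟨iSupIndep_of_pairwise_le_orthogonal hB horth htop, htop,
    fun _ _ hne u hu _ hv => horth hne hv u hu,
    nondegenerate_restrict_of_pairwise_le_orthogonal hsymm.isRefl hB horth htop⟩

theorem stmt3 {V : Type*} [AddCommGroup V] [Module ℝ V] [FiniteDimensional ℝ V]
    (B : LinearMap.BilinForm ℝ V) (hB : ∀ u v, B u v = B v u) (hBnd : B.Nondegenerate)
    (K : V →ₗ[ℝ] V →ₗ[ℝ] Module.End ℝ V)
    (hK1 : ∀ u v, K u v = - K v u)
    (hK2 : ∀ u v w t, B (K u v w) t = - B (K u v t) w)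
    (hK3 : ∀ u v w t, B (K u v w) t = B (K w t u) v)
    (hK4 : ∀ u v w, K u v w + K v w u + K w u v = 0)
    (hss : ∀ u v a b, K u v * K a b - K a b * K u v
        = K ((K u v) a) b + K a ((K u v) b))
    (Ric : Module.End ℝ V)
    (hRic : ∀ u v, B (Ric u) v = LinearMap.trace ℝ V (ricMap K u v)) :
    ∀ f : Option {P : Polynomial ℝ //
        P.Monic ∧ Irreducible P ∧ P ≠ X ∧ P ∣ minpoly ℝ Ric} → Submodule ℝ V,
      (f = fun o => o.elim (LinearMap.ker (Ric ^ 2))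
          (fun P => LinearMap.ker (Polynomial.aeval Ric P.1))) →
      iSupIndep f ∧
      (⨆ o, f o) = ⊤ ∧
      (∀ o o', o ≠ o' → ∀ u ∈ f o, ∀ v ∈ f o', B u v = 0) ∧
      (∀ o, (B.restrict (f o)).Nondegenerate) := by
  rintro f rfl
  have hRicci : IsRicciOperator B K Ric := hRic
  exact stmt3_general ⟨hB⟩ hBnd hK3 hK4 hRicci (hRicci.commute ⟨hB⟩ hBnd hK2 hss)
end

section
/- Let (V,⟨·,·⟩) be 4-dimensional with a basis (x,y,z,t) such that ⟨x,t⟩ = ⟨y,z⟩ = 1 and all other products of basis vectors vanish. Set π₁ = A_{x,z} + A_{t,y} and π₂ = A_{x,t} + A_{y,z}. For a,b,c ∈ ℝ let T = a·π₁∨π₁ + b·π₂∨π₂ + c·π₁∨π₂ (a bilinear map V × V → End(V)). Then: (i) T satisfies the algebraic Bianchi identity T(u,v)w + T(v,w)u + T(w,u)v = 0 for all u,v,w ∈ V if and only if b = −a; (ii) every such T with b = −a is invariant under 𝔤 := span{π₁, π₂}, i.e., [A, T(u,v)] = T(A u, v) + T(u, A v) for all A ∈ 𝔤 and all u,v ∈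 V. -/
/-- The skew-symmetric endomorphism `A_{u,v} : w ↦ ⟨v,w⟩u − ⟨u,w⟩v`. -/
def Avec {V : Type*} [AddCommGroup V] [Module ℝ V]
    (B : LinearMap.BilinForm ℝ V) (u v : V) : Module.End ℝ V :=
  (B v).smulRight u - (B u).smulRight v

/-- For skew-symmetric endomorphisms `α, β`, the bilinear map
`(α∨β)(u,v) = ½(⟨β u, v⟩ α + ⟨α u, v⟩ β)`. -/
noncomputable def opVee {V : Type*} [AddCommGroup V] [Module ℝ V]
    (B : LinearMap.BilinForm ℝ V) (α β : Module.End ℝ V) (u v : V) : Module.End ℝ V :=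
  (1 / 2 : ℝ) • (B (β u) v • α + B (α u) v • β)

/-!
A skew-adjoint `A` acts on `α ∨ β` as a derivation, so `T` is invariant under `𝔤` because `𝔤` is
abelian and consists of skew-adjoint maps.

For the Bianchi identity, the cyclic sum of `α ∨ β` is a symmetric bilinear function of `α` and `β`
that plays the role of a wedge product: on `A_{p,q}` and `A_{r,s}` it behaves like
`p ∧ q ∧ r ∧ s`. With `π₁ = x ∧ z + t ∧ y` and `π₂ = x ∧ t + y ∧ z` one reads off
`π₁ ∧ π₂ = 0` and `π₁ ∧ π₁ = 2 x ∧ z ∧ t ∧ y = 2 x ∧ t ∧ y ∧ z = π₂ ∧ π₂`, so the cyclic sum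
of `T` is `(a + b) π₁ ∧ π₁`. Finally `π₁ ∧ π₁ ≠ 0`, as its value at `(x, y, z)` is `x`.
-/

attribute [local instance] LieRing.ofAssociativeRing

section SkewMaps

variable {V : Type*} [AddCommGroup V] [Module ℝ V] (B : LinearMap.BilinForm ℝ V)

theorem Avec_apply (u v w : V) : Avec B u v w = B v w • u - B u w • v := rfl

theorem Avec_self (u : V) : Avec B u u = 0 :=
  sub_self _

theorem Avec_neg_left (u v : V) : Avec B (-u) v = -Avec B u v := by
  ext w
  simp only [Avec_apply, map_neg, LinearMap.neg_apply]
  module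

theorem Avec_neg_right (u v : V) : Avec B u (-v) = -Avec B u v := by
  ext w
  simp only [Avec_apply, map_neg, LinearMap.neg_apply]
  module

theorem opVee_comm (α β : Module.End ℝ V) (u v : V) : opVee B α β u v = opVee B β α u v := by
  rw [opVee, opVee, add_comm]

theorem opVee_self (α : Module.End ℝ V) (u v : V) : opVee B α α u v = B (α u) v • α := by
  rw [opVee]
  module

variable {B}

theorem Avec_mem_skewAdjointSubmodule (hB : B.IsSymm) (u v : V) :
    Avec B u v ∈ B.skewAdjointSubmodule := by
  rw [LinearMap.mem_skewAdjointSubmodule]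
  intro w w'
  simp only [Avec_apply, Pi.neg_apply, map_sub, map_smul, map_neg, LinearMap.sub_apply,
    LinearMap.smul_apply, smul_eq_mul, hB.eq w u, hB.eq w v]
  ring

theorem apply_left_of_mem_skewAdjointSubmodule {A : Module.End ℝ V}
    (hA : A ∈ B.skewAdjointSubmodule) (u v : V) : B (A u) v = -B u (A v) := by
  rw [(B.mem_skewAdjointSubmodule A).1 hA u v, Pi.neg_apply, map_neg]

theorem lie_Avec {A : Module.End ℝ V} (hA : A ∈ B.skewAdjointSubmodule) (u v : V) :
    ⁅A, Avec B u v⁆ = Avec B (A u) v + Avec B u (A v) := by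
  ext w
  simp only [Ring.lie_def, LinearMap.sub_apply, LinearMap.add_apply, Module.End.mul_apply,
    Avec_apply, map_sub, map_smul, apply_left_of_mem_skewAdjointSubmodule hA _ w]
  module

theorem lie_opVee {A : Module.End ℝ V} (hA : A ∈ B.skewAdjointSubmodule) (α β : Module.End ℝ V)
    (u v : V) :
    ⁅A, opVee B α β u v⁆ = opVee B α β (A u) v + opVee B α β u (A v)
      + opVee B ⁅A, α⁆ β u v + opVee B α ⁅A, β⁆ u v := by
  simp only [opVee, Ring.lie_def, mul_smul_comm, smul_mul_assoc, mul_add, add_mul,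
    LinearMap.sub_apply, Module.End.mul_apply, map_sub,
    apply_left_of_mem_skewAdjointSubmodule hA _ v]
  module

theorem lie_opVee_of_lie_eq_zero {A α β : Module.End ℝ V} (hA : A ∈ B.skewAdjointSubmodule)
    (hα : ⁅A, α⁆ = 0) (hβ : ⁅A, β⁆ = 0) (u v : V) :
    ⁅A, opVee B α β u v⁆ = opVee B α β (A u) v + opVee B α β u (A v) := by
  rw [lie_opVee hA, hα, hβ]
  simp [opVee]

end SkewMaps

section Invariance

theorem lie_eq_zero_of_mem_span_pair {R L M : Type*} [CommRing R] [LieRing L] [LieAlgebra R L]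
    [AddCommGroup M] [Module R M] [LieRingModule L M] [LieModule R L M] {p q a : L} {m : M}
    (hp : ⁅p, m⁆ = 0) (hq : ⁅q, m⁆ = 0) (ha : a ∈ Submodule.span R {p, q}) : ⁅a, m⁆ = 0 := by
  obtain ⟨k, l, rfl⟩ := Submodule.mem_span_pair.1 ha
  rw [add_lie, smul_lie, smul_lie, hp, hq, smul_zero, smul_zero, add_zero]

variable {V : Type*} [AddCommGroup V] [Module ℝ V] {B : LinearMap.BilinForm ℝ V}

theorem lie_opVee_combination_of_mem_span {α β A : Module.End ℝ V}
    (hα : α ∈ B.skewAdjointSubmodule) (hβ : β ∈ B.skewAdjointSubmodule) (hαβ : ⁅α, β⁆ = 0)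
    (hA : A ∈ Submodule.span ℝ {α, β}) {T : V → V → Module.End ℝ V} {a b c : ℝ}
    (hT : T = fun u v => a • opVee B α α u v + b • opVee B β β u v + c • opVee B α β u v)
    (u v : V) : ⁅A, T u v⁆ = T (A u) v + T u (A v) := by
  have hA_skew : A ∈ B.skewAdjointSubmodule :=
    Submodule.span_le.2 (Set.pair_subset hα hβ) hA
  have hβα : ⁅β, α⁆ = 0 := by rw [← lie_skew, hαβ, neg_zero]
  have hAα : ⁅A, α⁆ = 0 := lie_eq_zero_of_mem_span_pair (lie_self α) hβα hA
  have hAβ : ⁅A, β⁆ = 0 := lie_eq_zero_of_mem_span_pair hαβ (lie_self β) hA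
  simp only [hT, lie_add, lie_smul, lie_opVee_of_lie_eq_zero hA_skew hAα hAα,
    lie_opVee_of_lie_eq_zero hA_skew hAβ hAβ, lie_opVee_of_lie_eq_zero hA_skew hAα hAβ]
  module

end Invariance

section CyclicSum

variable {V : Type*} [AddCommGroup V] [Module ℝ V] (B : LinearMap.BilinForm ℝ V)

/-- The cyclic sum `(α∨β)(u,v)w + (α∨β)(v,w)u + (α∨β)(w,u)v`, whose vanishing is the algebraic
Bianchi identity of `α ∨ β`. It is bundled as a bilinear function of `(α, β)`, since it serves as
a wedge product of `α` and `β`. -/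
noncomputable def cyclicVee :
    Module.End ℝ V →ₗ[ℝ] Module.End ℝ V →ₗ[ℝ] V → V → V → V :=
  LinearMap.mk₂ ℝ
    (fun α β u v w => opVee B α β u v w + opVee B α β v w u + opVee B α β w u v)
    (fun α α' β => by
      ext u v w
      simp only [opVee, Pi.add_apply, LinearMap.add_apply, LinearMap.smul_apply, map_add]
      module)
    (fun k α β => by
      ext u v w
      simp only [opVee, Pi.smul_apply, LinearMap.add_apply, LinearMap.smul_apply, map_smul]
      module)
    (fun α β β' => by
      ext u v w
      simp only [opVee, Pi.add_apply, LinearMap.add_apply, LinearMap.smul_apply, map_add]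
      module)
    (fun k α β => by
      ext u v w
      simp only [opVee, Pi.smul_apply, LinearMap.add_apply, LinearMap.smul_apply, map_smul]
      module)

theorem cyclicVee_apply (α β : Module.End ℝ V) (u v w : V) :
    cyclicVee B α β u v w = opVee B α β u v w + opVee B α β v w u + opVee B α β w u v := rfl

theorem cyclicVee_comm (α β : Module.End ℝ V) : cyclicVee B α β = cyclicVee B β α := by
  ext u v w
  simp only [cyclicVee_apply, opVee_comm B α]

theorem cyclicVee_Avec_rotate (p q r s : V) :
    cyclicVee B (Avec B p q) (Avec B r s) = cyclicVee B (Avec B p r) (Avec B s q) := by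
  ext u v w
  simp only [cyclicVee_apply, opVee, Avec_apply, LinearMap.add_apply, LinearMap.sub_apply,
    LinearMap.smul_apply, map_sub, map_smul, smul_eq_mul]
  module

theorem cyclicVee_Avec_left_left (p q s : V) : cyclicVee B (Avec B p q) (Avec B p s) = 0 := by
  rw [cyclicVee_Avec_rotate, Avec_self, map_zero, LinearMap.zero_apply]

theorem cyclicVee_Avec_right_right (p q r : V) : cyclicVee B (Avec B p q) (Avec B r q) = 0 := by
  rw [cyclicVee_Avec_rotate, Avec_self, map_zero]

theorem cyclicVee_Avec_left_right (p q r : V) : cyclicVee B (Avec B p q) (Avec B r p) = 0 := by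
  rw [cyclicVee_Avec_rotate, cyclicVee_Avec_left_left]

theorem cyclicVee_Avec_right_left (p q s : V) : cyclicVee B (Avec B p q) (Avec B q s) = 0 := by
  rw [cyclicVee_comm, cyclicVee_Avec_left_right]

theorem cyclicVee_Avec_add_Avec_self (p q r s : V) :
    cyclicVee B (Avec B p q + Avec B r s) (Avec B p q + Avec B r s)
      = (2 : ℝ) • cyclicVee B (Avec B p q) (Avec B r s) := by
  simp only [map_add, LinearMap.add_apply, cyclicVee_Avec_left_left,
    cyclicVee_comm B (Avec B r s) (Avec B p q)]
  module

end CyclicSum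

section Frame

variable {V : Type*} [AddCommGroup V] [Module ℝ V] (B : LinearMap.BilinForm ℝ V) (x y z t : V)

/-- The endomorphism `π₁ = A_{x,z} + A_{t,y}`, for arbitrary vectors `x, y, z, t`. -/
def framePi₁ : Module.End ℝ V :=
  Avec B x z + Avec B t y

/-- The endomorphism `π₂ = A_{x,t} + A_{y,z}`, for arbitrary vectors `x, y, z, t`. -/
def framePi₂ : Module.End ℝ V :=
  Avec B x t + Avec B y z

theorem cyclicVee_framePi₁_framePi₂ :
    cyclicVee B (framePi₁ B x y z t) (framePi₂ B x y z t) = 0 := by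
  simp only [framePi₁, framePi₂, map_add, LinearMap.add_apply, cyclicVee_Avec_left_left,
    cyclicVee_Avec_right_right, cyclicVee_Avec_left_right, cyclicVee_Avec_right_left, add_zero]

theorem cyclicVee_framePi₂_self :
    cyclicVee B (framePi₂ B x y z t) (framePi₂ B x y z t)
      = cyclicVee B (framePi₁ B x y z t) (framePi₁ B x y z t) := by
  rw [framePi₁, framePi₂, cyclicVee_Avec_add_Avec_self, cyclicVee_Avec_add_Avec_self,
    cyclicVee_Avec_rotate B x z t y]

theorem cyclicVee_framePi_combination (a b c : ℝ) :
    a • cyclicVee B (framePi₁ B x y z t) (framePi₁ B x y z t)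
      + b • cyclicVee B (framePi₂ B x y z t) (framePi₂ B x y z t)
      + c • cyclicVee B (framePi₁ B x y z t) (framePi₂ B x y z t)
    = (a + b) • cyclicVee B (framePi₁ B x y z t) (framePi₁ B x y z t) := by
  rw [cyclicVee_framePi₂_self, cyclicVee_framePi₁_framePi₂, smul_zero, add_zero, add_smul]

variable {B}

theorem framePi₁_mem_skewAdjointSubmodule (hB : B.IsSymm) :
    framePi₁ B x y z t ∈ B.skewAdjointSubmodule :=
  add_mem (Avec_mem_skewAdjointSubmodule hB x z) (Avec_mem_skewAdjointSubmodule hB t y)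

theorem framePi₂_mem_skewAdjointSubmodule (hB : B.IsSymm) :
    framePi₂ B x y z t ∈ B.skewAdjointSubmodule :=
  add_mem (Avec_mem_skewAdjointSubmodule hB x t) (Avec_mem_skewAdjointSubmodule hB y z)

end Frame

/-- The Gram relations `⟨x,t⟩ = ⟨y,z⟩ = 1`, all other products zero, for vectors which need not
span `V`. Each product is recorded in one order only, `B` being symmetric in every use. -/
structure IsHyperbolicFrame {V : Type*} [AddCommGroup V] [Module ℝ V]
    (B : LinearMap.BilinForm ℝ V) (x y z t : V) : Prop where
  xt : B x t = 1
  yz : B y z = 1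
  xx : B x x = 0
  xy : B x y = 0
  xz : B x z = 0
  yy : B y y = 0
  yt : B y t = 0
  zz : B z z = 0
  zt : B z t = 0
  tt : B t t = 0

namespace IsHyperbolicFrame

variable {V : Type*} [AddCommGroup V] [Module ℝ V] {B : LinearMap.BilinForm ℝ V} {x y z t : V}

theorem ne_zero_left (h : IsHyperbolicFrame B x y z t) : x ≠ 0 := by
  rintro rfl
  simpa using h.xt

theorem framePi₁_apply_x (h : IsHyperbolicFrame B x y z t) (hB : B.IsSymm) :
    framePi₁ B x y z t x = -y := by
  simp [framePi₁, Avec_apply, hB.eq z x, hB.eq y x, hB.eq t x, h.xx, h.xy, h.xz, h.xt]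

theorem framePi₁_apply_y (h : IsHyperbolicFrame B x y z t) (hB : B.IsSymm) :
    framePi₁ B x y z t y = x := by
  simp [framePi₁, Avec_apply, hB.eq z y, hB.eq t y, h.xy, h.yy, h.yz, h.yt]

theorem framePi₁_apply_z (h : IsHyperbolicFrame B x y z t) (hB : B.IsSymm) :
    framePi₁ B x y z t z = t := by
  simp [framePi₁, Avec_apply, hB.eq t z, h.xz, h.yz, h.zz, h.zt]

theorem framePi₁_apply_t (h : IsHyperbolicFrame B x y z t) :
    framePi₁ B x y z t t = -z := by
  simp [framePi₁, Avec_apply, h.xt, h.yt, h.zt, h.tt]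

theorem lie_framePi₁_framePi₂ (h : IsHyperbolicFrame B x y z t) (hB : B.IsSymm) :
    ⁅framePi₁ B x y z t, framePi₂ B x y z t⁆ = 0 := by
  have hskew := framePi₁_mem_skewAdjointSubmodule x y z t hB
  rw [framePi₂, lie_add, lie_Avec hskew, lie_Avec hskew, h.framePi₁_apply_x hB,
    h.framePi₁_apply_y hB, h.framePi₁_apply_z hB, h.framePi₁_apply_t]
  simp only [Avec_neg_left, Avec_neg_right]
  abel

theorem cyclicVee_framePi₁_self_apply (h : IsHyperbolicFrame B x y z t) (hB : B.IsSymm) :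
    cyclicVee B (framePi₁ B x y z t) (framePi₁ B x y z t) x y z = x := by
  simp only [cyclicVee_apply, opVee_self, LinearMap.smul_apply, h.framePi₁_apply_x hB,
    h.framePi₁_apply_y hB, h.framePi₁_apply_z hB]
  simp [hB.eq t x, h.yy, h.xz, h.xt]

theorem smul_cyclicVee_framePi₁_self_eq_zero_iff (h : IsHyperbolicFrame B x y z t)
    (hB : B.IsSymm) (k : ℝ) :
    k • cyclicVee B (framePi₁ B x y z t) (framePi₁ B x y z t) = 0 ↔ k = 0 := by
  refine smul_eq_zero_iff_left fun hzero => h.ne_zero_left ?_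
  rw [← h.cyclicVee_framePi₁_self_apply hB, hzero]
  rfl

end IsHyperbolicFrame

theorem stmt13_general {V : Type*} [AddCommGroup V] [Module ℝ V] {B : LinearMap.BilinForm ℝ V}
    (hB : B.IsSymm) {x y z t : V} (h : IsHyperbolicFrame B x y z t) (a b c : ℝ)
    {π₁ π₂ : Module.End ℝ V}
    (hπ₁ : π₁ = Avec B x z + Avec B t y) (hπ₂ : π₂ = Avec B x t + Avec B y z)
    {T : V → V → Module.End ℝ V}
    (hT : T = fun u v => a • opVee B π₁ π₁ u v + b • opVee B π₂ π₂ u v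
      + c • opVee B π₁ π₂ u v) :
    ((∀ u v w, T u v w + T v w u + T w u v = 0) ↔ b = -a) ∧
    ∀ A ∈ Submodule.span ℝ ({π₁, π₂} : Set (Module.End ℝ V)), ∀ u v,
      A * T u v - T u v * A = T (A u) v + T u (A v) := by
  obtain rfl : π₁ = framePi₁ B x y z t := hπ₁
  obtain rfl : π₂ = framePi₂ B x y z t := hπ₂
  have hcyclic : (fun u v w => T u v w + T v w u + T w u v)
      = (a + b) • cyclicVee B (framePi₁ B x y z t) (framePi₁ B x y z t) := by
    rw [← cyclicVee_framePi_combination B x y z t a b c]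
    ext u v w
    simp only [hT, Pi.add_apply, Pi.smul_apply, cyclicVee_apply, LinearMap.add_apply,
      LinearMap.smul_apply]
    module
  constructor
  · calc (∀ u v w, T u v w + T v w u + T w u v = 0)
        ↔ (fun u v w => T u v w + T v w u + T w u v) = 0 := by simp only [funext_iff, Pi.zero_apply]
      _ ↔ a + b = 0 := by rw [hcyclic, h.smul_cyclicVee_framePi₁_self_eq_zero_iff hB]
      _ ↔ b = -a := by rw [add_comm, add_eq_zero_iff_eq_neg]
  · exact fun A hA => lie_opVee_combination_of_mem_span
      (framePi₁_mem_skewAdjointSubmodule x y z t hB)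
      (framePi₂_mem_skewAdjointSubmodule x y z t hB) (h.lie_framePi₁_framePi₂ hB) hA hT

theorem stmt13 {V : Type*} [AddCommGroup V] [Module ℝ V]
    (B : LinearMap.BilinForm ℝ V) (hB : ∀ u v, B u v = B v u)
    (x y z t : V)
    (hli : LinearIndependent ℝ ![x, y, z, t])
    (hspan : Submodule.span ℝ {x, y, z, t} = ⊤)
    (hxt : B x t = 1) (hyz : B y z = 1)
    (hxx : B x x = 0) (hxy : B x y = 0) (hxz : B x z = 0) (hyy : B y y = 0)
    (hyt : B y t = 0) (hzz : B z z = 0) (hzt : B z t = 0) (htt : B t t = 0)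
    (a b c : ℝ)
    (π₁ π₂ : Module.End ℝ V)
    (hπ₁ : π₁ = Avec B x z + Avec B t y) (hπ₂ : π₂ = Avec B x t + Avec B y z)
    (T : V → V → Module.End ℝ V)
    (hT : T = fun u v => a • opVee B π₁ π₁ u v + b • opVee B π₂ π₂ u v
      + c • opVee B π₁ π₂ u v) :
    ((∀ u v w, T u v w + T v w u + T w u v = 0) ↔ b = -a) ∧
    (b = -a → ∀ A ∈ Submodule.span ℝ ({π₁, π₂} : Set (Module.End ℝ V)), ∀ u v,
      A * T u v - T u v * A = T (A u) v + T u (A v)) := by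
  have h := stmt13_general ⟨hB⟩ ⟨hxt, hyz, hxx, hxy, hxz, hyy, hyt, hzz, hzt, htt⟩ a b c hπ₁ hπ₂ hT
  exact ⟨h.1, fun _ => h.2⟩
end
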